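/- Fix a prime p. For k ≥ 0 let C^{(k)} := PGL₂(ℤ_p)·diag(p^k,1)·PGL₂(ℤ_p) ⊂ PGL₂(ℚ_p), and for f ∈ V(ℤ_p) let C^{(k)}_f := {g ∈ C^{(k)} : g·f ∈ V(ℤ_p)} and m_p^{(k)}(f) := #(PGL₂(ℤ_p)\C^{(k)}_f). Then: (i) m_p^{(0)}(f) = 1 for all f ∈ V(ℤ_p); (ii) for every f ∈ V(ℤ_p) with Δ(f) ≠ 0 one has m_p(f) = Σ_{k≥0} m_p^{(k)}(f); (iii) for every k, if f₁ ≡ f₂ (mod p^{2k}V(ℤ_p)) then m_p^{(k)}(f₁) = m_p^{(k)}(f₂); and (iv) if m_p^{(k)}(f) ≠ 0 then p^{2k} divides Δ(f). -/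

import Mathlib

noncomputable section

namespace BQPaper

/-- A binary quartic form `a x⁴ + b x³y + c x²y² + d xy³ + e y⁴` over `R`,
recorded by its coefficients. -/
structure BQ (R : Type*) where
  a : R
  b : R
  c : R
  d : R
  e : R

/-- A 2×2 matrix `!![p, q; r, s]`, recorded by its entries. -/
structure Mat2 (R : Type*) where
  p : R
  q : R
  r : R
  s : R

variable {R S : Type*} [CommRing R] [CommRing S]

def Mat2.det (m : Mat2 R) : R := m.p * m.s - m.q * m.r

/-- Matrix product. -/
def Mat2.mul (m n : Mat2 R) : Mat2 R :=
  ⟨m.p * n.p + m.q * n.r, m.p * n.q + m.q * n.s,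
   m.r * n.p + m.s * n.r, m.r * n.q + m.s * n.s⟩

/-- Scalar multiple of a matrix. -/
def Mat2.smul (z : R) (m : Mat2 R) : Mat2 R := ⟨z * m.p, z * m.q, z * m.r, z * m.s⟩

def Mat2.map (φ : R →+* S) (m : Mat2 R) : Mat2 S := ⟨φ m.p, φ m.q, φ m.r, φ m.s⟩

/-- Evaluation of a binary quartic form at `(x, y)`. -/
def BQ.eval (f : BQ R) (x y : R) : R :=
  f.a * x ^ 4 + f.b * x ^ 3 * y + f.c * x ^ 2 * y ^ 2 + f.d * x * y ^ 3 + f.e * y ^ 4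

/-- The invariant `I(f) = 12ae − 3bd + c²`. -/
def BQ.invI (f : BQ R) : R := 12 * f.a * f.e - 3 * f.b * f.d + f.c ^ 2

/-- The invariant `J(f) = 72ace + 9bcd − 27ad² − 27eb² − 2c³`. -/
def BQ.invJ (f : BQ R) : R :=
  72 * f.a * f.c * f.e + 9 * f.b * f.c * f.d - 27 * f.a * f.d ^ 2
    - 27 * f.e * f.b ^ 2 - 2 * f.c ^ 3

/-- The discriminant of a binary quartic form; one has `Δ = (4I³ − J²)/27`. -/
def BQ.disc (f : BQ R) : R :=
  256 * f.a ^ 3 * f.e ^ 3 - 192 * f.a ^ 2 * f.b * f.d * f.e ^ 2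
    - 128 * f.a ^ 2 * f.c ^ 2 * f.e ^ 2 + 144 * f.a ^ 2 * f.c * f.d ^ 2 * f.e
    - 27 * f.a ^ 2 * f.d ^ 4 + 144 * f.a * f.b ^ 2 * f.c * f.e ^ 2
    - 6 * f.a * f.b ^ 2 * f.d ^ 2 * f.e - 80 * f.a * f.b * f.c ^ 2 * f.d * f.e
    + 18 * f.a * f.b * f.c * f.d ^ 3 + 16 * f.a * f.c ^ 4 * f.e
    - 4 * f.a * f.c ^ 3 * f.d ^ 2 - 27 * f.b ^ 4 * f.e ^ 2
    + 18 * f.b ^ 3 * f.c * f.d * f.e - 4 * f.b ^ 3 * f.d ^ 3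
    - 4 * f.b ^ 2 * f.c ^ 3 * f.e + f.b ^ 2 * f.c ^ 2 * f.d ^ 2

/-- Multiplication of all coefficients of a form by a scalar. -/
def BQ.rsmul (t : R) (f : BQ R) : BQ R := ⟨t * f.a, t * f.b, t * f.c, t * f.d, t * f.e⟩

/-- Substitution action of a 2×2 matrix on binary quartic forms:
`(m • f)(x,y) = f((x,y)·m) = f(px + ry, qx + sy)` for `m = !![p, q; r, s]`. -/
def BQ.subst (m : Mat2 R) (f : BQ R) : BQ R where
  a := f.a * m.p ^ 4 + f.b * m.p ^ 3 * m.q + f.c * m.p ^ 2 * m.q ^ 2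
      + f.d * m.p * m.q ^ 3 + f.e * m.q ^ 4
  b := 4 * f.a * m.p ^ 3 * m.r + f.b * m.p ^ 3 * m.s + 3 * f.b * m.p ^ 2 * m.q * m.r
      + 2 * f.c * m.p ^ 2 * m.q * m.s + 2 * f.c * m.p * m.q ^ 2 * m.r
      + 3 * f.d * m.p * m.q ^ 2 * m.s + f.d * m.q ^ 3 * m.r + 4 * f.e * m.q ^ 3 * m.s
  c := 6 * f.a * m.p ^ 2 * m.r ^ 2 + 3 * f.b * m.p ^ 2 * m.r * m.s
      + 3 * f.b * m.p * m.q * m.r ^ 2 + f.c * m.p ^ 2 * m.s ^ 2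
      + 4 * f.c * m.p * m.q * m.r * m.s + f.c * m.q ^ 2 * m.r ^ 2
      + 3 * f.d * m.p * m.q * m.s ^ 2 + 3 * f.d * m.q ^ 2 * m.r * m.s
      + 6 * f.e * m.q ^ 2 * m.s ^ 2
  d := 4 * f.a * m.p * m.r ^ 3 + 3 * f.b * m.p * m.r ^ 2 * m.s + f.b * m.q * m.r ^ 3
      + 2 * f.c * m.p * m.r * m.s ^ 2 + 2 * f.c * m.q * m.r ^ 2 * m.s
      + f.d * m.p * m.s ^ 3 + 3 * f.d * m.q * m.r * m.s ^ 2 + 4 * f.e * m.q * m.s ^ 3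
  e := f.a * m.r ^ 4 + f.b * m.r ^ 3 * m.s + f.c * m.r ^ 2 * m.s ^ 2
      + f.d * m.r * m.s ^ 3 + f.e * m.s ^ 4

/-- The twisted action `(γ·f)(x,y) = f((x,y)·γ)/det(γ)²`, which descends to `PGL₂`.
(`Ring.inverse` is the genuine inverse when `det` is a unit.) -/
def BQ.twist (m : Mat2 R) (f : BQ R) : BQ R :=
  BQ.rsmul (Ring.inverse m.det ^ 2) (f.subst m)

/-- Coefficientwise map of forms along a ring homomorphism. -/
def BQ.map (φ : R →+* S) (f : BQ R) : BQ S := ⟨φ f.a, φ f.b, φ f.c, φ f.d, φ f.e⟩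

end BQPaper

namespace BQPaper

variable (p : ℕ) [Fact p.Prime]

/-- A binary quartic form over `ℚ_p` is integral if all its coefficients lie
in `ℤ_p`. -/
def IsIntFormP (f : BQ ℚ_[p]) : Prop :=
  ‖f.a‖ ≤ 1 ∧ ‖f.b‖ ≤ 1 ∧ ‖f.c‖ ≤ 1 ∧ ‖f.d‖ ≤ 1 ∧ ‖f.e‖ ≤ 1

/-- A matrix over `ℚ_p` lies in `GL₂(ℤ_p)` if its entries lie in `ℤ_p` and its
determinant is a `p`-adic unit. -/
def IsIntUnitMatP (m : Mat2 ℚ_[p]) : Prop :=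
  ‖m.p‖ ≤ 1 ∧ ‖m.q‖ ≤ 1 ∧ ‖m.r‖ ≤ 1 ∧ ‖m.s‖ ≤ 1 ∧ ‖m.det‖ = 1

/-- Membership in the Cartan cell
`C^{(k)} = PGL₂(ℤ_p)·diag(p^k,1)·PGL₂(ℤ_p) ⊆ PGL₂(ℚ_p)`, presented by matrices:
`m` lies over `C^{(k)}` iff it is a nonzero scalar multiple of
`u₁·diag(p^k,1)·u₂` with `u₁, u₂ ∈ GL₂(ℤ_p)`. -/
def InCartan (k : ℕ) (m : Mat2 ℚ_[p]) : Prop :=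
  ∃ (u₁ u₂ : Mat2 ℚ_[p]) (z : ℚ_[p]), IsIntUnitMatP p u₁ ∧ IsIntUnitMatP p u₂ ∧ z ≠ 0 ∧
    m = Mat2.smul z (Mat2.mul (Mat2.mul u₁ ⟨(p : ℚ_[p]) ^ k, 0, 0, 1⟩) u₂)

/-- The canonical ring map `ℤ_p → ℚ_p`. -/
def toQp : ℤ_[p] →+* ℚ_[p] := PadicInt.Coe.ringHom

/-- `C^{(k)}_f = {g ∈ C^{(k)} : g·f ∈ V(ℤ_p)}`, presented by matrices. -/
def CartanSet (k : ℕ) (f : BQ ℤ_[p]) : Type _ :=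
  {m : Mat2 ℚ_[p] // InCartan p k m ∧ IsUnit m.det ∧
    IsIntFormP p ((f.map (toQp p)).twist m)}

/-- Left `PGL₂(ℤ_p)`-coset equivalence. -/
def cosetRel (k : ℕ) (f : BQ ℤ_[p]) (m₁ m₂ : CartanSet p k f) : Prop :=
  ∃ (u : Mat2 ℚ_[p]) (z : ℚ_[p]), IsIntUnitMatP p u ∧ z ≠ 0 ∧
    m₂.val = Mat2.smul z (Mat2.mul u m₁.val)

/-- `m_p^{(k)}(f) = #(PGL₂(ℤ_p)\C^{(k)}_f)`. -/
def mpk (k : ℕ) (f : BQ ℤ_[p]) : ℕ := Nat.card (Quot (cosetRel p k f))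

/-- `PGL₂(ℚ_p)_f`, presented by matrices. -/
def LocalSet (f : BQ ℤ_[p]) : Type _ :=
  {m : Mat2 ℚ_[p] // IsUnit m.det ∧ IsIntFormP p ((f.map (toQp p)).twist m)}

def localRel (f : BQ ℤ_[p]) (m₁ m₂ : LocalSet p f) : Prop :=
  ∃ (u : Mat2 ℚ_[p]) (z : ℚ_[p]), IsIntUnitMatP p u ∧ z ≠ 0 ∧
    m₂.val = Mat2.smul z (Mat2.mul u m₁.val)

/-- `m_p(f) = #(PGL₂(ℤ_p)\PGL₂(ℚ_p)_f)`. -/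
def mp (f : BQ ℤ_[p]) : ℕ := Nat.card (Quot (localRel p f))

/-- Coefficientwise congruence `f ≡ g (mod p^j V(ℤ_p))`. -/
def CongMod (j : ℕ) (f g : BQ ℤ_[p]) : Prop :=
  (p : ℤ_[p]) ^ j ∣ (f.a - g.a) ∧ (p : ℤ_[p]) ^ j ∣ (f.b - g.b) ∧
  (p : ℤ_[p]) ^ j ∣ (f.c - g.c) ∧ (p : ℤ_[p]) ^ j ∣ (f.d - g.d) ∧
  (p : ℤ_[p]) ^ j ∣ (f.e - g.e)

/-!
Every assertion is read off a decomposition `m = z · U · diag(pᵏ, 1) · V` with `U, V ∈ GL₂(ℤ_p)`.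
The cell is determined by `‖det m‖ / ‖m‖² = p⁻ᵏ` for the maximum norm, which is invariant under
`GL₂(ℤ_p)` on both sides, and every invertible matrix lies in a cell because its entry of largest
norm can be moved to the lower right corner and used as a pivot; so the cells partition the cosets.
A cell contains finitely many cosets because two integral matrices of determinant `pᵏ` (up to
units) that agree modulo `pᵏ` differ by a left factor in `GL₂(ℤ_p)`. The twist by an element of the
`k`-th cell sends `p²ᵏV(ℤ_p)` into `V(ℤ_p)`, which gives the dependence on `f` modulo `p²ᵏ` only.
Finally, `diag(pᵏ, 1)` divides the coefficients `d` and `e` by `pᵏ` and `p²ᵏ`, and each monomial of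
the discriminant contains `e` or `d²`.
-/

section

variable {R S K : Type*} [CommRing R] [CommRing S] {p : ℕ} [Fact p.Prime]

attribute [ext] BQ Mat2

/-! ### Two-by-two matrices -/

namespace Mat2

/-- The identity matrix. -/
def one : Mat2 R := ⟨1, 0, 0, 1⟩

/-- The adjugate matrix, which inverts a matrix up to the factor `det`. -/
def adj (m : Mat2 R) : Mat2 R := ⟨m.s, -m.q, -m.r, m.p⟩

/-- The permutation matrix exchanging rows (on the left) or columns (on the right). -/
def swap : Mat2 R := ⟨0, 1, 1, 0⟩

lemma det_mul (m n : Mat2 R) : (m.mul n).det = m.det * n.det := by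
  simp only [det, mul]; ring

lemma det_smul (z : R) (m : Mat2 R) : (smul z m).det = z ^ 2 * m.det := by
  simp only [det, smul]; ring

lemma det_adj (m : Mat2 R) : m.adj.det = m.det := by
  simp only [det, adj]; ring

lemma det_map (φ : R →+* S) (m : Mat2 R) : (m.map φ).det = φ m.det := by
  simp only [det, map, map_sub, map_mul]

protected lemma mul_assoc (l m n : Mat2 R) : (l.mul m).mul n = l.mul (m.mul n) := by
  ext <;> simp only [mul] <;> ring

protected lemma one_mul (m : Mat2 R) : one.mul m = m := by
  ext <;> simp [mul, one]

protected lemma mul_one (m : Mat2 R) : m.mul one = m := by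
  ext <;> simp [mul, one]

protected lemma one_smul (m : Mat2 R) : smul 1 m = m := by
  ext <;> simp [smul]

protected lemma smul_smul (y z : R) (m : Mat2 R) : smul y (smul z m) = smul (y * z) m := by
  ext <;> simp only [smul, mul_assoc]

lemma mul_smul (z : R) (m n : Mat2 R) : m.mul (smul z n) = smul z (m.mul n) := by
  ext <;> simp only [mul, smul] <;> ring

lemma smul_mul (z : R) (m n : Mat2 R) : (smul z m).mul n = smul z (m.mul n) := by
  ext <;> simp only [mul, smul] <;> ring

lemma adj_mul (m : Mat2 R) : m.adj.mul m = smul m.det one := by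
  ext <;> simp only [mul, adj, smul, det, one] <;> ring

lemma mul_adj (m : Mat2 R) : m.mul m.adj = smul m.det one := by
  ext <;> simp only [mul, adj, smul, det, one] <;> ring

lemma swap_mul_swap : (swap : Mat2 R).mul swap = one := by
  ext <;> simp [swap, mul, one]

lemma map_mul (φ : R →+* S) (m n : Mat2 R) : (m.mul n).map φ = (m.map φ).mul (n.map φ) := by
  ext <;> simp only [mul, map, _root_.map_add, _root_.map_mul]

instance [Finite R] : Finite (Mat2 R) :=
  Finite.of_injective (fun m : Mat2 R => (m.p, m.q, m.r, m.s)) fun m n h => by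
    simpa only [Prod.mk.injEq, Mat2.ext_iff] using h

-- If `N = M + det M • X`, then `N = (1 + X · adj M) · M`.
lemma exists_mul_eq_of_map_eq {φ : R →+* S} {M N : Mat2 R}
    (hφ : RingHom.ker φ ≤ Ideal.span {M.det}) (h : M.map φ = N.map φ) :
    ∃ U : Mat2 R, U.mul M = N := by
  have det_dvd_sub {x y : R} (hxy : φ x = φ y) : M.det ∣ y - x :=
    Ideal.mem_span_singleton.1 (hφ (by rw [RingHom.mem_ker, map_sub, hxy, sub_self]))
  obtain ⟨a, ha⟩ := det_dvd_sub (congrArg Mat2.p h)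
  obtain ⟨b, hb⟩ := det_dvd_sub (congrArg Mat2.q h)
  obtain ⟨c, hc⟩ := det_dvd_sub (congrArg Mat2.r h)
  obtain ⟨d, hd⟩ := det_dvd_sub (congrArg Mat2.s h)
  refine ⟨⟨1 + (a * M.s - b * M.r), b * M.p - a * M.q,
    c * M.s - d * M.r, 1 + (d * M.p - c * M.q)⟩, ?_⟩
  simp only [det] at ha hb hc hd
  ext <;> simp only [mul]
  · linear_combination -ha
  · linear_combination -hb
  · linear_combination -hc
  · linear_combination -hd

lemma exists_isUnit_det_mul_eq_of_map_eq [IsDomain R] {φ : R →+* S} {M N : Mat2 R}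
    (hM : M.det ≠ 0) (hMN : Associated N.det M.det)
    (hφ : RingHom.ker φ ≤ Ideal.span {M.det}) (h : M.map φ = N.map φ) :
    ∃ U : Mat2 R, IsUnit U.det ∧ U.mul M = N := by
  obtain ⟨U, rfl⟩ := exists_mul_eq_of_map_eq hφ h
  rw [det_mul, mul_comm] at hMN
  exact ⟨U, isUnit_of_associated_mul hMN hM, rfl⟩

/-- The action of a matrix on the quadratic monomials `(x², 2xy, y²)`, i.e. its symmetric square;
it transports the catalecticant matrix of a form. -/
def symSq (m : Mat2 R) : Matrix (Fin 3) (Fin 3) R :=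
  !![m.p ^ 2, m.p * m.r, m.r ^ 2;
     2 * m.p * m.q, m.p * m.s + m.q * m.r, 2 * m.r * m.s;
     m.q ^ 2, m.q * m.s, m.s ^ 2]

lemma det_symSq (m : Mat2 R) : m.symSq.det = m.det ^ 3 := by
  simp only [symSq, Matrix.det_fin_three, Matrix.of_apply, Matrix.cons_val, det]; ring

end Mat2

/-! ### The twisted action on binary quartic forms -/

namespace BQ

/-- The coefficientwise sum of two forms. -/
def add (f g : BQ R) : BQ R := ⟨f.a + g.a, f.b + g.b, f.c + g.c, f.d + g.d, f.e + g.e⟩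

protected lemma one_rsmul (f : BQ R) : rsmul 1 f = f := by
  ext <;> simp only [rsmul, one_mul]

lemma rsmul_rsmul (y z : R) (f : BQ R) : rsmul y (rsmul z f) = rsmul (y * z) f := by
  ext <;> simp only [rsmul, mul_assoc]

lemma rsmul_add (z : R) (f g : BQ R) : rsmul z (f.add g) = (rsmul z f).add (rsmul z g) := by
  ext <;> simp only [rsmul, add, mul_add]

lemma map_rsmul (φ : R →+* S) (z : R) (f : BQ R) :
    (rsmul z f).map φ = rsmul (φ z) (f.map φ) := by
  ext <;> simp only [rsmul, map, map_mul]

lemma map_add (φ : R →+* S) (f g : BQ R) : (f.add g).map φ = (f.map φ).add (g.map φ) := by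
  ext <;> simp only [add, map, _root_.map_add]

lemma subst_one (f : BQ R) : f.subst .one = f := by
  ext <;> simp [subst, Mat2.one]

lemma subst_mul (m n : Mat2 R) (f : BQ R) : f.subst (m.mul n) = (f.subst n).subst m := by
  ext <;> simp only [subst, Mat2.mul] <;> ring

lemma subst_smul (z : R) (m : Mat2 R) (f : BQ R) :
    f.subst (.smul z m) = rsmul (z ^ 4) (f.subst m) := by
  ext <;> simp only [subst, Mat2.smul, rsmul] <;> ring

lemma subst_rsmul (z : R) (m : Mat2 R) (f : BQ R) :
    (rsmul z f).subst m = rsmul z (f.subst m) := by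
  ext <;> simp only [subst, rsmul] <;> ring

lemma subst_add (m : Mat2 R) (f g : BQ R) : (f.add g).subst m = (f.subst m).add (g.subst m) := by
  ext <;> simp only [subst, add] <;> ring

lemma map_subst (φ : R →+* S) (m : Mat2 R) (f : BQ R) :
    (f.subst m).map φ = (f.map φ).subst (m.map φ) := by
  ext <;> simp only [subst, map, Mat2.map, _root_.map_add, map_mul, map_pow, map_ofNat]

lemma twist_one (f : BQ R) : f.twist .one = f := by
  rw [twist, subst_one]
  simp [Mat2.det, Mat2.one, BQ.one_rsmul]

lemma twist_mul (m n : Mat2 R) (f : BQ R) : f.twist (m.mul n) = (f.twist n).twist m := by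
  simp only [twist, Mat2.det_mul, subst_mul, subst_rsmul, rsmul_rsmul, Ring.mul_inverse_rev,
    mul_pow, mul_comm]

lemma twist_smul {z : R} (hz : IsUnit z) (m : Mat2 R) (f : BQ R) :
    f.twist (.smul z m) = f.twist m := by
  have inverse_mul : Ring.inverse z * z = 1 := Ring.inverse_mul_cancel z hz
  simp only [twist, Mat2.det_smul, subst_smul, rsmul_rsmul, Ring.mul_inverse_rev,
    ← Ring.inverse_pow]
  congr 1
  calc (Ring.inverse m.det * Ring.inverse z ^ 2) ^ 2 * z ^ 4
      = Ring.inverse m.det ^ 2 * (Ring.inverse z * z) ^ 4 := by ring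
    _ = Ring.inverse m.det ^ 2 := by rw [inverse_mul, one_pow, mul_one]

lemma twist_add (m : Mat2 R) (f g : BQ R) : (f.add g).twist m = (f.twist m).add (g.twist m) := by
  simp only [twist, subst_add, rsmul_add]

lemma twist_rsmul_det_sq {m : Mat2 R} (hm : IsUnit m.det) (f : BQ R) :
    (rsmul (m.det ^ 2) f).twist m = f.subst m := by
  rw [twist, subst_rsmul, rsmul_rsmul, ← mul_pow, Ring.inverse_mul_cancel _ hm, one_pow,
    BQ.one_rsmul]

lemma map_twist (φ : R →+* S) {m : Mat2 R} (hm : IsUnit m.det) (f : BQ R) :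
    (f.twist m).map φ = (f.map φ).twist (m.map φ) := by
  have map_inverse : φ (Ring.inverse m.det) = Ring.inverse (φ m.det) :=
    (hm.map φ).mul_left_cancel <| by
      rw [← map_mul, Ring.mul_inverse_cancel _ hm, map_one, Ring.mul_inverse_cancel _ (hm.map φ)]
  rw [twist, map_rsmul, map_subst, map_pow, map_inverse, twist, Mat2.det_map]

lemma twist_diag [Field K] {t : K} (ht : t ≠ 0) (f : BQ K) :
    f.twist ⟨t, 0, 0, 1⟩ = ⟨t ^ 2 * f.a, t * f.b, f.c, f.d / t, f.e / t ^ 2⟩ := by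
  ext <;> simp [twist, subst, rsmul, Mat2.det] <;> field_simp

/-! ### Invariance of the discriminant -/

/-- Twelve times the catalecticant (Hankel) matrix `!![a, b/4, c/6; b/4, c/6, d/4; c/6, d/4, e]`:
the Gram matrix of the form on quadratic monomials, through which `invJ` becomes a determinant. -/
def catalecticant (f : BQ R) : Matrix (Fin 3) (Fin 3) R :=
  !![12 * f.a, 3 * f.b, 2 * f.c; 3 * f.b, 2 * f.c, 3 * f.d; 2 * f.c, 3 * f.d, 12 * f.e]

lemma det_catalecticant (f : BQ R) : f.catalecticant.det = 4 * f.invJ := by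
  simp only [catalecticant, Matrix.det_fin_three, Matrix.of_apply, Matrix.cons_val, invJ]; ring

lemma catalecticant_subst (m : Mat2 R) (f : BQ R) :
    (f.subst m).catalecticant = m.symSq.transpose * f.catalecticant * m.symSq := by
  ext i j
  fin_cases i <;> fin_cases j <;>
    simp only [catalecticant, Mat2.symSq, subst, Matrix.mul_apply, Matrix.transpose_apply,
      Fin.sum_univ_three, Matrix.of_apply, Matrix.cons_val, Fin.zero_eta, Fin.mk_one,
      Fin.reduceFinMk] <;> ring

lemma invI_subst (m : Mat2 R) (f : BQ R) : (f.subst m).invI = m.det ^ 4 * f.invI := by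
  simp only [subst, invI, Mat2.det]; ring

lemma four_mul_invJ_subst (m : Mat2 R) (f : BQ R) :
    4 * (f.subst m).invJ = m.det ^ 6 * (4 * f.invJ) := by
  rw [← det_catalecticant, catalecticant_subst, Matrix.det_mul, Matrix.det_mul,
    Matrix.det_transpose, Mat2.det_symSq, det_catalecticant]
  ring

lemma disc_eq_invI_invJ (f : BQ R) : 27 * f.disc = 4 * f.invI ^ 3 - f.invJ ^ 2 := by
  simp only [disc, invI, invJ]; ring

lemma disc_subst [NoZeroDivisors R] [CharZero R] (m : Mat2 R) (f : BQ R) :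
    (f.subst m).disc = m.det ^ 12 * f.disc := by
  have hJ := four_mul_invJ_subst m f
  have h432 : (432 : R) ≠ 0 := OfNat.ofNat_ne_zero 432
  refine mul_left_cancel₀ h432 ?_
  calc 432 * (f.subst m).disc
      = 64 * (f.subst m).invI ^ 3 - (4 * (f.subst m).invJ) ^ 2 := by
        linear_combination 16 * disc_eq_invI_invJ (f.subst m)
    _ = m.det ^ 12 * (64 * f.invI ^ 3 - (4 * f.invJ) ^ 2) := by rw [hJ, invI_subst]; ring
    _ = 432 * (m.det ^ 12 * f.disc) := by
        linear_combination -16 * m.det ^ 12 * disc_eq_invI_invJ f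

lemma disc_rsmul (t : R) (f : BQ R) : (rsmul t f).disc = t ^ 6 * f.disc := by
  simp only [rsmul, disc]; ring

lemma disc_twist [NoZeroDivisors R] [CharZero R] {m : Mat2 R} (hm : IsUnit m.det) (f : BQ R) :
    (f.twist m).disc = f.disc := by
  rw [twist, disc_rsmul, disc_subst, ← mul_assoc, ← pow_mul, ← mul_pow,
    Ring.inverse_mul_cancel _ hm, one_pow, one_mul]

lemma sq_dvd_disc {t : R} {f : BQ R} (hd : t ∣ f.d) (he : t ^ 2 ∣ f.e) : t ^ 2 ∣ f.disc := by
  have disc_eq : f.disc =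
      f.e * (256 * f.a ^ 3 * f.e ^ 2 - 192 * f.a ^ 2 * f.b * f.d * f.e
        - 128 * f.a ^ 2 * f.c ^ 2 * f.e + 144 * f.a ^ 2 * f.c * f.d ^ 2
        + 144 * f.a * f.b ^ 2 * f.c * f.e - 6 * f.a * f.b ^ 2 * f.d ^ 2
        - 80 * f.a * f.b * f.c ^ 2 * f.d + 16 * f.a * f.c ^ 4 - 27 * f.b ^ 4 * f.e
        + 18 * f.b ^ 3 * f.c * f.d - 4 * f.b ^ 2 * f.c ^ 3)
      + f.d ^ 2 * (-27 * f.a ^ 2 * f.d ^ 2 + 18 * f.a * f.b * f.c * f.d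
        - 4 * f.a * f.c ^ 3 - 4 * f.b ^ 3 * f.d + f.b ^ 2 * f.c ^ 2) := by
    simp only [disc]; ring
  rw [disc_eq]
  exact dvd_add (he.mul_right _) ((pow_dvd_pow_of_dvd hd 2).mul_right _)

end BQ

/-! ### Integral forms and integral matrices -/

lemma toQp_injective : Function.Injective (toQp p) := Subtype.val_injective

lemma exists_toQp_eq {x : ℚ_[p]} (hx : ‖x‖ ≤ 1) : ∃ y : ℤ_[p], toQp p y = x := ⟨⟨x, hx⟩, rfl⟩

lemma natCast_prime_ne_zero : (p : ℚ_[p]) ≠ 0 := Nat.cast_ne_zero.2 (Fact.out : p.Prime).ne_zero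

lemma isIntFormP_iff {f : BQ ℚ_[p]} : IsIntFormP p f ↔ ∃ g : BQ ℤ_[p], g.map (toQp p) = f := by
  constructor
  · rintro ⟨ha, hb, hc, hd, he⟩
    exact ⟨⟨⟨_, ha⟩, ⟨_, hb⟩, ⟨_, hc⟩, ⟨_, hd⟩, ⟨_, he⟩⟩, rfl⟩
  · rintro ⟨g, rfl⟩
    exact ⟨g.a.2, g.b.2, g.c.2, g.d.2, g.e.2⟩

lemma isIntFormP_map (g : BQ ℤ_[p]) : IsIntFormP p (g.map (toQp p)) := isIntFormP_iff.2 ⟨g, rfl⟩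

lemma map_toQp_diag (k : ℕ) :
    (⟨(p : ℤ_[p]) ^ k, 0, 0, 1⟩ : Mat2 ℤ_[p]).map (toQp p) = ⟨(p : ℚ_[p]) ^ k, 0, 0, 1⟩ := by
  simp only [Mat2.map, map_pow, map_natCast, map_zero, map_one]

lemma IsIntFormP.add {f g : BQ ℚ_[p]} (hf : IsIntFormP p f) (hg : IsIntFormP p g) :
    IsIntFormP p (f.add g) := by
  obtain ⟨f, rfl⟩ := isIntFormP_iff.1 hf
  obtain ⟨g, rfl⟩ := isIntFormP_iff.1 hg
  rw [← BQ.map_add]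
  exact isIntFormP_map _

lemma isIntUnitMatP_map {U : Mat2 ℤ_[p]} (hU : IsUnit U.det) :
    IsIntUnitMatP p (U.map (toQp p)) := by
  refine ⟨U.p.2, U.q.2, U.r.2, U.s.2, ?_⟩
  rw [Mat2.det_map]
  exact PadicInt.isUnit_iff.1 hU

namespace IsIntUnitMatP

lemma exists_map_eq {u : Mat2 ℚ_[p]} (hu : IsIntUnitMatP p u) :
    ∃ U : Mat2 ℤ_[p], IsUnit U.det ∧ U.map (toQp p) = u := by
  obtain ⟨hp, hq, hr, hs, hdet⟩ := hu
  exact ⟨⟨⟨_, hp⟩, ⟨_, hq⟩, ⟨_, hr⟩, ⟨_, hs⟩⟩, PadicInt.isUnit_iff.2 hdet, rfl⟩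

lemma one : IsIntUnitMatP p .one := by simp [IsIntUnitMatP, Mat2.one, Mat2.det]

lemma swap : IsIntUnitMatP p .swap := by simp [IsIntUnitMatP, Mat2.swap, Mat2.det]

variable {u v : Mat2 ℚ_[p]}

lemma mul (hu : IsIntUnitMatP p u) (hv : IsIntUnitMatP p v) : IsIntUnitMatP p (u.mul v) := by
  obtain ⟨U, hU, rfl⟩ := hu.exists_map_eq
  obtain ⟨V, hV, rfl⟩ := hv.exists_map_eq
  rw [← Mat2.map_mul]
  exact isIntUnitMatP_map (Mat2.det_mul U V ▸ hU.mul hV)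

lemma adj (hu : IsIntUnitMatP p u) : IsIntUnitMatP p u.adj := by
  obtain ⟨hp, hq, hr, hs, hdet⟩ := hu
  exact ⟨hs, (norm_neg u.q).trans_le hq, (norm_neg u.r).trans_le hr, hp, u.det_adj ▸ hdet⟩

lemma det_ne_zero (hu : IsIntUnitMatP p u) : u.det ≠ 0 :=
  norm_ne_zero_iff.1 (hu.2.2.2.2 ▸ one_ne_zero)

end IsIntUnitMatP

lemma IsIntFormP.twist {u : Mat2 ℚ_[p]} (hu : IsIntUnitMatP p u) {f : BQ ℚ_[p]}
    (hf : IsIntFormP p f) : IsIntFormP p (f.twist u) := by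
  obtain ⟨U, hU, rfl⟩ := hu.exists_map_eq
  obtain ⟨g, rfl⟩ := isIntFormP_iff.1 hf
  rw [← BQ.map_twist _ hU]
  exact isIntFormP_map _

lemma isIntFormP_twist_iff {u : Mat2 ℚ_[p]} (hu : IsIntUnitMatP p u) {f : BQ ℚ_[p]} :
    IsIntFormP p (f.twist u) ↔ IsIntFormP p f := by
  refine ⟨fun h => ?_, .twist hu⟩
  have twist_adj_twist : (f.twist u).twist u.adj = f := by
    rw [← BQ.twist_mul, Mat2.adj_mul, BQ.twist_smul hu.det_ne_zero.isUnit, BQ.twist_one]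
  exact twist_adj_twist ▸ h.twist hu.adj

/-! ### The maximum norm -/

namespace Mat2

/-- The maximum of the norms of the entries; with the norm of `det` it determines the Cartan cell
of a matrix. -/
def maxNorm [Norm K] (m : Mat2 K) : ℝ := max (max ‖m.p‖ ‖m.q‖) (max ‖m.r‖ ‖m.s‖)

lemma maxNorm_le_iff [Norm K] {m : Mat2 K} {t : ℝ} :
    m.maxNorm ≤ t ↔ (‖m.p‖ ≤ t ∧ ‖m.q‖ ≤ t) ∧ ‖m.r‖ ≤ t ∧ ‖m.s‖ ≤ t := by
  simp only [maxNorm, max_le_iff]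

variable [NormedField K]

lemma maxNorm_nonneg (m : Mat2 K) : 0 ≤ m.maxNorm :=
  (norm_nonneg m.p).trans (maxNorm_le_iff.1 le_rfl).1.1

lemma maxNorm_pos {m : Mat2 K} (hm : m.det ≠ 0) : 0 < m.maxNorm := by
  refine m.maxNorm_nonneg.lt_of_ne' fun h0 => hm ?_
  obtain ⟨⟨hp, hq⟩, -⟩ := maxNorm_le_iff.1 h0.le
  simp only [det, norm_le_zero_iff.1 hp, norm_le_zero_iff.1 hq, zero_mul, sub_zero]

lemma maxNorm_smul (z : K) (m : Mat2 K) : (smul z m).maxNorm = ‖z‖ * m.maxNorm := by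
  simp only [maxNorm, smul, norm_mul, mul_max_of_nonneg _ _ (norm_nonneg z)]

lemma maxNorm_mul_le [IsUltrametricDist K] (m n : Mat2 K) :
    (m.mul n).maxNorm ≤ m.maxNorm * n.maxNorm := by
  obtain ⟨⟨hmp, hmq⟩, hmr, hms⟩ := maxNorm_le_iff.1 (le_refl m.maxNorm)
  obtain ⟨⟨hnp, hnq⟩, hnr, hns⟩ := maxNorm_le_iff.1 (le_refl n.maxNorm)
  have norm_entry_le {a b c d : K} (ha : ‖a‖ ≤ m.maxNorm) (hb : ‖b‖ ≤ n.maxNorm)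
      (hc : ‖c‖ ≤ m.maxNorm) (hd : ‖d‖ ≤ n.maxNorm) :
      ‖a * b + c * d‖ ≤ m.maxNorm * n.maxNorm :=
    (IsUltrametricDist.norm_add_le_max _ _).trans
      (max_le (norm_mul_le_of_le ha hb) (norm_mul_le_of_le hc hd))
  exact maxNorm_le_iff.2 ⟨⟨norm_entry_le hmp hnp hmq hnr, norm_entry_le hmp hnq hmq hns⟩,
    norm_entry_le hmr hnp hms hnr, norm_entry_le hmr hnq hms hns⟩

end Mat2

namespace IsIntUnitMatP

variable {u : Mat2 ℚ_[p]} (hu : IsIntUnitMatP p u) (m : Mat2 ℚ_[p])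
include hu

lemma maxNorm_le_one : u.maxNorm ≤ 1 :=
  Mat2.maxNorm_le_iff.2 ⟨⟨hu.1, hu.2.1⟩, hu.2.2.1, hu.2.2.2.1⟩

lemma maxNorm_mul_left_le : (u.mul m).maxNorm ≤ m.maxNorm :=
  (Mat2.maxNorm_mul_le u m).trans (mul_le_of_le_one_left m.maxNorm_nonneg hu.maxNorm_le_one)

lemma maxNorm_mul_right_le : (m.mul u).maxNorm ≤ m.maxNorm :=
  (Mat2.maxNorm_mul_le m u).trans (mul_le_of_le_one_right m.maxNorm_nonneg hu.maxNorm_le_one)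

lemma maxNorm_smul_det : (Mat2.smul u.det m).maxNorm = m.maxNorm := by
  rw [Mat2.maxNorm_smul, hu.2.2.2.2, one_mul]

lemma maxNorm_mul_left : (u.mul m).maxNorm = m.maxNorm := by
  refine (hu.maxNorm_mul_left_le m).antisymm ?_
  calc m.maxNorm = (u.adj.mul (u.mul m)).maxNorm := by
        rw [← Mat2.mul_assoc, Mat2.adj_mul, Mat2.smul_mul, Mat2.one_mul, hu.maxNorm_smul_det]
    _ ≤ (u.mul m).maxNorm := hu.adj.maxNorm_mul_left_le _

lemma maxNorm_mul_right : (m.mul u).maxNorm = m.maxNorm := by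
  refine (hu.maxNorm_mul_right_le m).antisymm ?_
  calc m.maxNorm = ((m.mul u).mul u.adj).maxNorm := by
        rw [Mat2.mul_assoc, Mat2.mul_adj, Mat2.mul_smul, Mat2.mul_one, hu.maxNorm_smul_det]
    _ ≤ (m.mul u).maxNorm := hu.adj.maxNorm_mul_right_le _

end IsIntUnitMatP

/-! ### Left cosets of `PGL₂(ℤ_p)` -/

variable (p) in
/-- Two matrices represent the same coset in `PGL₂(ℤ_p)\PGL₂(ℚ_p)`. The relations `cosetRel` and
`localRel` are its restrictions. -/
def SameCoset (m n : Mat2 ℚ_[p]) : Prop :=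
  ∃ (u : Mat2 ℚ_[p]) (z : ℚ_[p]), IsIntUnitMatP p u ∧ z ≠ 0 ∧ n = .smul z (u.mul m)

lemma equivalence_sameCoset : Equivalence (SameCoset p) where
  refl m := ⟨.one, 1, .one, one_ne_zero, by rw [Mat2.one_smul, Mat2.one_mul]⟩
  symm := by
    rintro m _ ⟨u, z, hu, hz, rfl⟩
    have hzu : z * u.det ≠ 0 := mul_ne_zero hz hu.det_ne_zero
    refine ⟨u.adj, (z * u.det)⁻¹, hu.adj, inv_ne_zero hzu, ?_⟩
    rw [Mat2.mul_smul, ← Mat2.mul_assoc, Mat2.adj_mul, Mat2.smul_mul, Mat2.one_mul,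
      Mat2.smul_smul, Mat2.smul_smul, mul_assoc, inv_mul_cancel₀ hzu, Mat2.one_smul]
  trans := by
    rintro m _ _ ⟨u, y, hu, hy, rfl⟩ ⟨v, z, hv, hz, rfl⟩
    refine ⟨v.mul u, z * y, hv.mul hu, mul_ne_zero hz hy, ?_⟩
    rw [Mat2.mul_smul, Mat2.smul_smul, Mat2.mul_assoc]

lemma localRel_of_mk_eq {f : BQ ℤ_[p]} {m n : LocalSet p f}
    (h : Quot.mk (localRel p f) m = Quot.mk (localRel p f) n) : SameCoset p m.val n.val :=
  Quotient.exact (s := ⟨localRel p f, equivalence_sameCoset.comap Subtype.val⟩) h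

/-! ### Cartan cells -/

namespace InCartan

variable {k l : ℕ} {m n : Mat2 ℚ_[p]}

lemma smul {z : ℚ_[p]} (hz : z ≠ 0) (hm : InCartan p k m) : InCartan p k (.smul z m) := by
  obtain ⟨u, v, y, hu, hv, hy, rfl⟩ := hm
  exact ⟨u, v, z * y, hu, hv, mul_ne_zero hz hy, by rw [Mat2.smul_smul]⟩

lemma mul_left {u : Mat2 ℚ_[p]} (hu : IsIntUnitMatP p u) (hm : InCartan p k m) :
    InCartan p k (u.mul m) := by
  obtain ⟨u₁, u₂, z, hu₁, hu₂, hz, rfl⟩ := hm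
  exact ⟨u.mul u₁, u₂, z, hu.mul hu₁, hu₂, hz, by simp only [Mat2.mul_smul, Mat2.mul_assoc]⟩

lemma mul_right {u : Mat2 ℚ_[p]} (hu : IsIntUnitMatP p u) (hm : InCartan p k m) :
    InCartan p k (m.mul u) := by
  obtain ⟨u₁, u₂, z, hu₁, hu₂, hz, rfl⟩ := hm
  exact ⟨u₁, u₂.mul u, z, hu₁, hu₂.mul hu, hz, by simp only [Mat2.smul_mul, Mat2.mul_assoc]⟩

lemma of_sameCoset (hm : InCartan p k m) (h : SameCoset p m n) : InCartan p k n := by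
  obtain ⟨u, z, hu, hz, rfl⟩ := h
  exact (hm.mul_left hu).smul hz

lemma exists_integral_representative (hm : InCartan p k m) :
    ∃ (z : ℚ_[p]) (M : Mat2 ℤ_[p]), z ≠ 0 ∧ Associated M.det ((p : ℤ_[p]) ^ k) ∧
      m = .smul z (M.map (toQp p)) := by
  obtain ⟨_, _, z, hu, hv, hz, rfl⟩ := hm
  obtain ⟨U, hU, rfl⟩ := hu.exists_map_eq
  obtain ⟨V, hV, rfl⟩ := hv.exists_map_eq
  refine ⟨z, (U.mul ⟨(p : ℤ_[p]) ^ k, 0, 0, 1⟩).mul V, hz, ?_, ?_⟩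
  · rw [Mat2.det_mul, Mat2.det_mul, mul_right_comm]
    refine (associated_unit_mul_left _ _ (hU.mul hV)).trans (.of_eq ?_)
    simp only [Mat2.det, mul_one, mul_zero, sub_zero]
  · rw [Mat2.map_mul, Mat2.map_mul, map_toQp_diag]

lemma norm_det (hm : InCartan p k m) : ‖m.det‖ = m.maxNorm ^ 2 * ((p : ℝ) ^ k)⁻¹ := by
  obtain ⟨u, v, z, hu, hv, -, rfl⟩ := hm
  have maxNorm_diag : (⟨(p : ℚ_[p]) ^ k, 0, 0, 1⟩ : Mat2 ℚ_[p]).maxNorm = 1 := by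
    have one_le_pow : (1 : ℝ) ≤ (p : ℝ) ^ k :=
      one_le_pow₀ (by exact_mod_cast (Fact.out : p.Prime).one_le)
    simp [Mat2.maxNorm, inv_le_one_of_one_le₀ one_le_pow]
  have norm_det_diag : ‖(⟨(p : ℚ_[p]) ^ k, 0, 0, 1⟩ : Mat2 ℚ_[p]).det‖ = ((p : ℝ) ^ k)⁻¹ := by
    simp [Mat2.det]
  rw [Mat2.maxNorm_smul, hv.maxNorm_mul_right, hu.maxNorm_mul_left, maxNorm_diag, Mat2.det_smul,
    Mat2.det_mul, Mat2.det_mul, norm_mul, norm_mul, norm_mul, hu.2.2.2.2, hv.2.2.2.2,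
    norm_det_diag, norm_pow]
  ring

lemma eq_of_det_ne_zero (hm : m.det ≠ 0) (hk : InCartan p k m) (hl : InCartan p l m) : k = l := by
  have hpow : ((p : ℝ) ^ k)⁻¹ = ((p : ℝ) ^ l)⁻¹ :=
    mul_left_cancel₀ (pow_ne_zero 2 (Mat2.maxNorm_pos hm).ne') (hk.norm_det.symm.trans hl.norm_det)
  exact Nat.pow_right_injective (Fact.out : p.Prime).two_le (by exact_mod_cast inv_injective hpow)

end InCartan

lemma inCartan_map_of_s_eq_one {k : ℕ} {M : Mat2 ℤ_[p]} (hs : M.s = 1)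
    (hM : Associated ((p : ℤ_[p]) ^ k) M.det) : InCartan p k (M.map (toQp p)) := by
  obtain ⟨w, hw⟩ := hM
  have factorization :
      M = ((⟨w, M.q, 0, 1⟩ : Mat2 ℤ_[p]).mul ⟨(p : ℤ_[p]) ^ k, 0, 0, 1⟩).mul ⟨1, 0, M.r, 1⟩ := by
    simp only [Mat2.det, hs] at hw
    ext <;> simp only [Mat2.mul, hs]
    · linear_combination -hw
    all_goals ring
  refine ⟨_, _, 1, isIntUnitMatP_map (U := ⟨w, M.q, 0, 1⟩) ?_,
    isIntUnitMatP_map (U := ⟨1, 0, M.r, 1⟩) ?_, one_ne_zero, ?_⟩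
  · simp [Mat2.det]
  · simp [Mat2.det]
  · rw [Mat2.one_smul]
    conv_lhs => rw [factorization, Mat2.map_mul, Mat2.map_mul, map_toQp_diag]

lemma exists_inCartan_of_maxNorm_le_norm_s {m : Mat2 ℚ_[p]} (hm : m.det ≠ 0)
    (hs : m.maxNorm ≤ ‖m.s‖) : ∃ k, InCartan p k m := by
  have hs_pos : 0 < ‖m.s‖ := (Mat2.maxNorm_pos hm).trans_le hs
  have hs0 : m.s ≠ 0 := norm_pos_iff.1 hs_pos
  have exists_quotient {x : ℚ_[p]} (hx : ‖x‖ ≤ ‖m.s‖) : ∃ y : ℤ_[p], toQp p y = x / m.s :=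
    exists_toQp_eq (by rw [norm_div]; exact (div_le_one hs_pos).2 hx)
  obtain ⟨⟨hp, hq⟩, hr, -⟩ := Mat2.maxNorm_le_iff.1 hs
  obtain ⟨a, ha⟩ := exists_quotient hp
  obtain ⟨b, hb⟩ := exists_quotient hq
  obtain ⟨c, hc⟩ := exists_quotient hr
  have hmap : m = .smul m.s ((⟨a, b, c, 1⟩ : Mat2 ℤ_[p]).map (toQp p)) := by
    ext <;> simp only [Mat2.smul, Mat2.map, ha, hb, hc, map_one, mul_one, mul_div_cancel₀ _ hs0]
  have hdet : (⟨a, b, c, 1⟩ : Mat2 ℤ_[p]).det ≠ 0 := fun h0 => hm <| by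
    rw [hmap, Mat2.det_smul, Mat2.det_map, h0, map_zero, mul_zero]
  obtain ⟨k, hk⟩ :=
    IsDiscreteValuationRing.associated_pow_irreducible hdet PadicInt.irreducible_p
  exact ⟨k, hmap ▸ (inCartan_map_of_s_eq_one rfl hk.symm).smul hs0⟩

lemma exists_maxNorm_le_norm_s (m : Mat2 ℚ_[p]) :
    ∃ u v : Mat2 ℚ_[p], IsIntUnitMatP p u ∧ IsIntUnitMatP p v ∧ u.mul u = .one ∧ v.mul v = .one ∧
      m.maxNorm ≤ ‖((u.mul m).mul v).s‖ := by
  have maxNorm_cases : m.maxNorm = ‖m.p‖ ∨ m.maxNorm = ‖m.q‖ ∨ m.maxNorm = ‖m.r‖ ∨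
      m.maxNorm = ‖m.s‖ := by
    grind [Mat2.maxNorm]
  have one_mul_one : (Mat2.one : Mat2 ℚ_[p]).mul .one = .one := Mat2.one_mul _
  rcases maxNorm_cases with h | h | h | h
  · exact ⟨.swap, .swap, .swap, .swap, Mat2.swap_mul_swap, Mat2.swap_mul_swap,
      by simp [h, Mat2.mul, Mat2.swap]⟩
  · exact ⟨.swap, .one, .swap, .one, Mat2.swap_mul_swap, one_mul_one,
      by simp [h, Mat2.mul, Mat2.swap, Mat2.one]⟩
  · exact ⟨.one, .swap, .one, .swap, one_mul_one, Mat2.swap_mul_swap,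
      by simp [h, Mat2.mul, Mat2.swap, Mat2.one]⟩
  · exact ⟨.one, .one, .one, .one, one_mul_one, one_mul_one, by simp [h, Mat2.mul, Mat2.one]⟩

lemma exists_inCartan {m : Mat2 ℚ_[p]} (hm : m.det ≠ 0) : ∃ k, InCartan p k m := by
  obtain ⟨u, v, hu, hv, huu, hvv, hs⟩ := exists_maxNorm_le_norm_s m
  have hdet : ((u.mul m).mul v).det ≠ 0 := by
    rw [Mat2.det_mul, Mat2.det_mul]
    exact mul_ne_zero (mul_ne_zero hu.det_ne_zero hm) hv.det_ne_zero
  rw [← hu.maxNorm_mul_left m, ← hv.maxNorm_mul_right] at hs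
  obtain ⟨k, hk⟩ := exists_inCartan_of_maxNorm_le_norm_s hdet hs
  have conj_conj : (u.mul ((u.mul m).mul v)).mul v = m := by
    rw [← Mat2.mul_assoc, ← Mat2.mul_assoc, huu, Mat2.one_mul, Mat2.mul_assoc, hvv, Mat2.mul_one]
  exact ⟨k, conj_conj ▸ (hk.mul_left hu).mul_right hv⟩

/-! ### Integrality and the discriminant on a Cartan cell -/

lemma CongMod.symm {j : ℕ} {f g : BQ ℤ_[p]} (h : CongMod p j f g) : CongMod p j g f :=
  ⟨dvd_sub_comm.1 h.1, dvd_sub_comm.1 h.2.1, dvd_sub_comm.1 h.2.2.1, dvd_sub_comm.1 h.2.2.2.1,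
    dvd_sub_comm.1 h.2.2.2.2⟩

lemma CongMod.exists_eq_add {j : ℕ} {f g : BQ ℤ_[p]} (h : CongMod p j f g) :
    ∃ h : BQ ℤ_[p], f = g.add (.rsmul ((p : ℤ_[p]) ^ j) h) := by
  obtain ⟨⟨a, ha⟩, ⟨b, hb⟩, ⟨c, hc⟩, ⟨d, hd⟩, ⟨e, he⟩⟩ := h
  refine ⟨⟨a, b, c, d, e⟩, ?_⟩
  ext <;> simp only [BQ.add, BQ.rsmul, ← ha, ← hb, ← hc, ← hd, ← he, add_sub_cancel]

namespace InCartan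

variable {k : ℕ} {m : Mat2 ℚ_[p]}

lemma isIntFormP_twist_rsmul (hm : InCartan p k m) (g : BQ ℤ_[p]) :
    IsIntFormP p (((BQ.rsmul ((p : ℤ_[p]) ^ (2 * k)) g).map (toQp p)).twist m) := by
  obtain ⟨z, M, hz, ⟨w, hw⟩, rfl⟩ := hm.exists_integral_representative
  have hdet : (M.map (toQp p)).det ≠ 0 := by
    rw [Mat2.det_map, map_ne_zero_iff _ toQp_injective]
    exact left_ne_zero_of_mul (hw ▸ pow_ne_zero k PadicInt.prime_p.ne_zero)
  have hpow : (p : ℤ_[p]) ^ (2 * k) = M.det ^ 2 * w ^ 2 := by rw [← mul_pow, hw, ← pow_mul']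
  rw [BQ.twist_smul hz.isUnit, hpow, ← BQ.rsmul_rsmul, BQ.map_rsmul, map_pow, ← Mat2.det_map,
    BQ.twist_rsmul_det_sq hdet.isUnit, ← BQ.map_subst]
  exact isIntFormP_map _

lemma isIntFormP_twist_of_congMod (hm : InCartan p k m) {f g : BQ ℤ_[p]}
    (hfg : CongMod p (2 * k) f g) (hg : IsIntFormP p ((g.map (toQp p)).twist m)) :
    IsIntFormP p ((f.map (toQp p)).twist m) := by
  obtain ⟨h, rfl⟩ := hfg.exists_eq_add
  rw [BQ.map_add, BQ.twist_add]
  exact hg.add (hm.isIntFormP_twist_rsmul h)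

lemma pow_dvd_disc (hm : InCartan p k m) {f : BQ ℤ_[p]}
    (hf : IsIntFormP p ((f.map (toQp p)).twist m)) : (p : ℤ_[p]) ^ (2 * k) ∣ f.disc := by
  obtain ⟨u, _, z, hu, hv, hz, rfl⟩ := hm
  obtain ⟨V, hV, rfl⟩ := hv.exists_map_eq
  have hpk : (p : ℚ_[p]) ^ k ≠ 0 := pow_ne_zero k natCast_prime_ne_zero
  rw [BQ.twist_smul hz.isUnit, BQ.twist_mul, BQ.twist_mul, isIntFormP_twist_iff hu,
    ← BQ.map_twist _ hV, BQ.twist_diag hpk] at hf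
  obtain ⟨-, -, -, hd, he⟩ := hf
  have pow_dvd {j : ℕ} {x : ℤ_[p]} (hx : ‖toQp p x / (p : ℚ_[p]) ^ j‖ ≤ 1) :
      (p : ℤ_[p]) ^ j ∣ x := by
    obtain ⟨y, hy⟩ := exists_toQp_eq hx
    refine ⟨y, toQp_injective ?_⟩
    rw [map_mul, map_pow, map_natCast, hy,
      mul_div_cancel₀ _ (pow_ne_zero j natCast_prime_ne_zero)]
  rw [← pow_mul] at he
  rw [← BQ.disc_twist hV, pow_mul']
  exact BQ.sq_dvd_disc (pow_dvd hd) (by rw [← pow_mul]; exact pow_dvd he)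

end InCartan

/-! ### Counting cosets -/

lemma sameCoset_of_map_toZModPow_eq {k : ℕ} {M N : Mat2 ℤ_[p]} {y z : ℚ_[p]} (hy : y ≠ 0)
    (hz : z ≠ 0) (hM : Associated M.det ((p : ℤ_[p]) ^ k))
    (hN : Associated N.det ((p : ℤ_[p]) ^ k))
    (h : M.map (PadicInt.toZModPow k) = N.map (PadicInt.toZModPow k)) :
    SameCoset p (.smul y (M.map (toQp p))) (.smul z (N.map (toQp p))) := by
  have hM0 : M.det ≠ 0 := hM.ne_zero_iff.2 (pow_ne_zero k PadicInt.prime_p.ne_zero)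
  have hker : RingHom.ker (PadicInt.toZModPow (p := p) k) ≤ Ideal.span {M.det} := by
    rw [PadicInt.ker_toZModPow, Ideal.span_singleton_eq_span_singleton.2 hM]
  obtain ⟨U, hU, rfl⟩ :=
    Mat2.exists_isUnit_det_mul_eq_of_map_eq hM0 (hN.trans hM.symm) hker h
  refine ⟨U.map (toQp p), z * y⁻¹, isIntUnitMatP_map hU, mul_ne_zero hz (inv_ne_zero hy), ?_⟩
  rw [Mat2.mul_smul, Mat2.smul_smul, inv_mul_cancel_right₀ hy, Mat2.map_mul]

instance finite_quot_cosetRel (k : ℕ) (f : BQ ℤ_[p]) : Finite (Quot (cosetRel p k f)) := by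
  choose z M hz hM hzM using
    fun m : CartanSet p k f => m.2.1.exists_integral_representative
  have : NeZero (p ^ k) := ⟨pow_ne_zero k (Fact.out : p.Prime).ne_zero⟩
  refine Finite.of_injective
    (fun c : Quot (cosetRel p k f) => (M c.out).map (PadicInt.toZModPow k)) fun c d hcd => ?_
  have hrel : cosetRel p k f c.out d.out := by
    have := sameCoset_of_map_toZModPow_eq (hz c.out) (hz d.out) (hM _) (hM _) hcd
    rwa [← hzM, ← hzM] at this
  rw [← c.out_eq, ← d.out_eq, Quot.sound hrel]

lemma card_sigma_eq_finsum {ι : Type*} {β : ι → Type*} [∀ i, Finite (β i)]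
    (h : {i | Nat.card (β i) ≠ 0}.Finite) : Nat.card (Σ i, β i) = ∑ᶠ i, Nat.card (β i) := by
  have mem_of_fiber (i : ι) (b : β i) : i ∈ h.toFinset :=
    h.mem_toFinset.2 (Nat.card_ne_zero.2 ⟨⟨b⟩, inferInstance⟩)
  rw [finsum_eq_sum_of_support_subset _ (s := h.toFinset) h.coe_toFinset.ge,
    ← Finset.sum_coe_sort, ← Nat.card_sigma]
  exact Nat.card_congr (Equiv.sigmaSubtypeEquivOfSubset β (· ∈ h.toFinset) mem_of_fiber).symm

/-- The inclusion `PGL₂(ℤ_p)\C^{(k)}_f → PGL₂(ℤ_p)\PGL₂(ℚ_p)_f`. -/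
def cellToLocal (k : ℕ) (f : BQ ℤ_[p]) : Quot (cosetRel p k f) → Quot (localRel p f) :=
  Quot.map (fun m => ⟨m.1, m.2.2⟩) fun _ _ h => h

lemma bijective_sigma_cellToLocal (f : BQ ℤ_[p]) :
    Function.Bijective
      fun c : Σ k, Quot (cosetRel p k f) => cellToLocal c.1 f c.2 := by
  constructor
  · rintro ⟨k, ⟨m⟩⟩ ⟨l, ⟨n⟩⟩ h
    have hmn : SameCoset p m.1 n.1 := localRel_of_mk_eq h
    obtain rfl : k = l :=
      (m.2.1.of_sameCoset hmn).eq_of_det_ne_zero n.2.2.1.ne_zero n.2.1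
    exact congrArg (Sigma.mk k) (Quot.sound hmn)
  · rintro ⟨m⟩
    obtain ⟨k, hk⟩ := exists_inCartan m.2.1.ne_zero
    exact ⟨⟨k, Quot.mk _ ⟨m.1, hk, m.2⟩⟩, rfl⟩

lemma mp_eq_finsum {f : BQ ℤ_[p]} (h : {k | mpk p k f ≠ 0}.Finite) :
    mp p f = ∑ᶠ k, mpk p k f :=
  (Nat.card_eq_of_bijective _ (bijective_sigma_cellToLocal f)).symm.trans (card_sigma_eq_finsum h)

lemma inCartan_zero_iff {m : Mat2 ℚ_[p]} : InCartan p 0 m ↔ SameCoset p .one m := by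
  have diag_zero : (⟨(p : ℚ_[p]) ^ 0, 0, 0, 1⟩ : Mat2 ℚ_[p]) = .one := by rw [pow_zero, Mat2.one]
  simp only [InCartan, SameCoset, diag_zero, Mat2.mul_one]
  constructor
  · rintro ⟨u, v, z, hu, hv, hz, rfl⟩
    exact ⟨u.mul v, z, hu.mul hv, hz, rfl⟩
  · rintro ⟨u, z, hu, hz, rfl⟩
    exact ⟨u, .one, z, hu, .one, hz, by rw [Mat2.mul_one]⟩

lemma mpk_zero (f : BQ ℤ_[p]) : mpk p 0 f = 1 := by
  let base : CartanSet p 0 f :=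
    ⟨.one, inCartan_zero_iff.2 (equivalence_sameCoset.refl _), IsIntUnitMatP.one.det_ne_zero.isUnit,
      (BQ.twist_one (f.map (toQp p))).symm ▸ isIntFormP_map f⟩
  have eq_mk_base : ∀ c : Quot (cosetRel p 0 f), c = Quot.mk _ base := by
    rintro ⟨m⟩
    have base_rel : cosetRel p 0 f base m := inCartan_zero_iff.1 m.2.1
    exact (Quot.sound base_rel).symm
  exact Nat.card_eq_one_iff_exists.2 ⟨Quot.mk _ base, eq_mk_base⟩

lemma mpk_congr {k : ℕ} {f g : BQ ℤ_[p]} (h : CongMod p (2 * k) f g) : mpk p k f = mpk p k g :=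
  Nat.card_congr <| Quot.congr
    (Equiv.subtypeEquivRight fun _ =>
      ⟨fun hf => ⟨hf.1, hf.2.1, hf.1.isIntFormP_twist_of_congMod h.symm hf.2.2⟩,
        fun hg => ⟨hg.1, hg.2.1, hg.1.isIntFormP_twist_of_congMod h hg.2.2⟩⟩)
    fun _ _ => Iff.rfl

lemma pow_dvd_disc_of_mpk_ne_zero {k : ℕ} {f : BQ ℤ_[p]} (h : mpk p k f ≠ 0) :
    (p : ℤ_[p]) ^ (2 * k) ∣ f.disc := by
  obtain ⟨⟨m⟩⟩ := (Nat.card_ne_zero.1 h).1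
  exact m.2.1.pow_dvd_disc m.2.2.2

lemma finite_setOf_mpk_ne_zero {f : BQ ℤ_[p]} (hf : f.disc ≠ 0) :
    {k | mpk p k f ≠ 0}.Finite := by
  have hfin : FiniteMultiplicity (p : ℤ_[p]) f.disc :=
    .of_prime_left PadicInt.prime_p hf
  refine (Set.finite_Iic (multiplicity (p : ℤ_[p]) f.disc)).subset fun k hk => ?_
  have := hfin.le_multiplicity_of_pow_dvd (pow_dvd_disc_of_mpk_ne_zero hk)
  exact Set.mem_Iic.2 (by lia)

end

/-- Properties of the Cartan-cell decomposition of `m_p`: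
(i) `m_p^{(0)} ≡ 1`; (ii) `m_p(f) = Σ_k m_p^{(k)}(f)` for `Δ(f) ≠ 0`; (iii) `m_p^{(k)}` is
defined modulo `p^{2k}`; (iv) `m_p^{(k)}(f) ≠ 0` forces `p^{2k} ∣ Δ(f)`. -/
theorem mpk_properties :
    (∀ f : BQ ℤ_[p], mpk p 0 f = 1) ∧
    (∀ f : BQ ℤ_[p], f.disc ≠ 0 →
      {k : ℕ | mpk p k f ≠ 0}.Finite ∧ mp p f = ∑ᶠ k : ℕ, mpk p k f) ∧
    (∀ (k : ℕ) (f₁ f₂ : BQ ℤ_[p]), CongMod p (2 * k) f₁ f₂ → mpk p k f₁ = mpk p k f₂) ∧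
    (∀ (k : ℕ) (f : BQ ℤ_[p]), mpk p k f ≠ 0 → (p : ℤ_[p]) ^ (2 * k) ∣ f.disc) := by
  exact ⟨mpk_zero,
    fun _ hf => ⟨finite_setOf_mpk_ne_zero hf, mp_eq_finsum (finite_setOf_mpk_ne_zero hf)⟩,
    fun _ _ _ => mpk_congr, fun _ _ => pow_dvd_disc_of_mpk_ne_zero⟩

end BQPaper
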